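/- arXiv:2203.06625 — 2 statements merged into one kernel-verified Lean document; each statement's English description precedes it below -/
import Mathlib

section
/- Let q be a prime power and 1 < k < n−1. If X ⊂ V is a (k−1)-dimensional subspace such that S^c(X) is a maximal clique of Γ(n,k)_q, then there is no (k+1)-dimensional subspace Y ⊂ V such that S^c(X) = T^c(Y). -/
/-!
Common definitions: `V = F^n`, coordinate hyperplanes, Grassmannians `G_k(V)`,
non-degenerate linear `[n,k]_q` codes `C(n,k)_q`, adjacency, stars, tops,
and (maximal) cliques of the graph `Γ(n,k)_q` of non-degenerate codes.
-/

/-- The `i`-th coordinate hyperplane `C_i ⊂ F^n`: the kernel of the `i`-th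
coordinate functional. -/
def coordHyp (F : Type*) [Field F] (n : ℕ) (i : Fin n) : Submodule F (Fin n → F) :=
  LinearMap.ker (LinearMap.proj i : (Fin n → F) →ₗ[F] F)

/-- The Grassmannian `G_k(V)`: the set of `k`-dimensional subspaces of `F^n`. -/
def grass (F : Type*) [Field F] (n k : ℕ) : Set (Submodule F (Fin n → F)) :=
  {X | Module.finrank F ↥X = k}

/-- `C(n,k)_q`: the set of non-degenerate linear `[n,k]` codes, i.e. `k`-dimensional
subspaces of `F^n` not contained in any coordinate hyperplane. -/
def ndCodes (F : Type*) [Field F] (n k : ℕ) : Set (Submodule F (Fin n → F)) :=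
  {X | Module.finrank F ↥X = k ∧ ∀ i : Fin n, ¬ X ≤ coordHyp F n i}

/-- Adjacency of `k`-dimensional subspaces: the intersection is `(k-1)`-dimensional. -/
def adjSub (F : Type*) [Field F] (n k : ℕ) (X Y : Submodule F (Fin n → F)) : Prop :=
  Module.finrank F ↥(X ⊓ Y) = k - 1

/-- The star `S(X) ⊂ G_k(V)` of a `(k-1)`-dimensional subspace `X`: all `k`-dimensional
subspaces containing `X`. -/
def starOf (F : Type*) [Field F] (n k : ℕ) (X : Submodule F (Fin n → F)) :
    Set (Submodule F (Fin n → F)) :=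
  {Y | Module.finrank F ↥Y = k ∧ X ≤ Y}

/-- The top `T(Y) ⊂ G_k(V)` of a `(k+1)`-dimensional subspace `Y`: all `k`-dimensional
subspaces of `Y`. -/
def topOf (F : Type*) [Field F] (n k : ℕ) (Y : Submodule F (Fin n → F)) :
    Set (Submodule F (Fin n → F)) :=
  {Z | Module.finrank F ↥Z = k ∧ Z ≤ Y}

/-- `S^c(X) = S(X) ∩ C(n,k)_q`. -/
def scOf (F : Type*) [Field F] (n k : ℕ) (X : Submodule F (Fin n → F)) :
    Set (Submodule F (Fin n → F)) :=
  starOf F n k X ∩ ndCodes F n k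

/-- `T^c(Y) = T(Y) ∩ C(n,k)_q`. -/
def tcOf (F : Type*) [Field F] (n k : ℕ) (Y : Submodule F (Fin n → F)) :
    Set (Submodule F (Fin n → F)) :=
  topOf F n k Y ∩ ndCodes F n k

/-- `c(X)`: the number of coordinate hyperplanes containing the subspace `X`. -/
noncomputable def numHyp (F : Type*) [Field F] (n : ℕ) (X : Submodule F (Fin n → F)) : ℕ :=
  Set.ncard {i : Fin n | X ≤ coordHyp F n i}

/-- A clique of the graph `Γ(n,k)_q`: a set of non-degenerate `[n,k]` codes that are
pairwise adjacent. -/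
def isClique (F : Type*) [Field F] (n k : ℕ) (S : Set (Submodule F (Fin n → F))) : Prop :=
  S ⊆ ndCodes F n k ∧ S.Pairwise (adjSub F n k)

/-- A maximal clique of `Γ(n,k)_q`: a clique not properly contained in another clique. -/
def isMaxClique (F : Type*) [Field F] (n k : ℕ) (S : Set (Submodule F (Fin n → F))) : Prop :=
  isClique F n k S ∧ ∀ T, isClique F n k T → S ⊆ T → T = S

/-- `[m]_q = q^{m-1} + ⋯ + q + 1 = (q^m - 1)/(q - 1)`. -/
def gaussNum (q m : ℕ) : ℕ := ∑ i ∈ Finset.range m, q ^ i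

/-!
Suppose `S^c(X) = T^c(Y)`. Since `X ≠ 0`, some hyperplane `C_i` does not contain `X`. A vector `v`
with `v_j ≠ 0` whenever `X ⊆ C_j` lies in `X` or in the code `X + ⟨v⟩` of the star, hence in `Y`.
The vectors `1` and `1 + e_i` are of this kind, so `e_i ∈ Y`. As `X + ⟨e_i⟩` has dimension less
than `k + 1`, there is a functional `g` vanishing on it but not on `Y`; put `f = x_i + g` and
`H = Y ∩ ker f`. Since `f = x_i` on `X` and `X ⊄ C_i`, also `X ⊄ H`, so `H` is degenerate, say
`H ⊆ C_j`. From `Y = H + ⟨e_i⟩` we get `y_j = f(y) (e_i)_j` on `Y`: for `j ≠ i` this makes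
`Y` degenerate, which it is not, as it contains a code of the star; for `j = i` it makes `g` vanish
on `Y`.
-/

section DualFunctionals

variable {K V : Type*} [Field K] [AddCommGroup V] [Module K V]

lemma finrank_ker_inf_add_one {f : Module.Dual K V} {Y : Submodule K V} [FiniteDimensional K Y]
    (hf : ¬ Y ≤ LinearMap.ker f) :
    Module.finrank K ↥(LinearMap.ker f ⊓ Y) + 1 = Module.finrank K Y := by
  have hne : f.domRestrict Y ≠ 0 := by
    rwa [Ne, ← LinearMap.ker_eq_top, LinearMap.ker_domRestrict, Submodule.comap_subtype_eq_top]
  rw [← Module.Dual.finrank_ker_add_one_of_ne_zero hne, LinearMap.ker_domRestrict, inf_comm,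
    ← Submodule.map_comap_subtype, Submodule.finrank_map_subtype_eq]

lemma exists_dual_le_ker_and_not_le_ker_of_finrank_lt {W Y : Submodule K V}
    [FiniteDimensional K W] (h : Module.finrank K W < Module.finrank K Y) :
    ∃ g : Module.Dual K V, W ≤ LinearMap.ker g ∧ ¬ Y ≤ LinearMap.ker g := by
  have hYW : ¬ Y ≤ W := fun hle => h.not_ge (Submodule.finrank_mono hle)
  obtain ⟨y, hyY, hyW⟩ := SetLike.not_le_iff_exists.mp hYW
  obtain ⟨g, hgy, hWg⟩ := Submodule.exists_le_ker_of_notMem hyW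
  exact ⟨g, hWg, fun hle => hgy (hle hyY)⟩

end DualFunctionals

section Codes

variable {F : Type*} [Field F] {n k : ℕ} {X Y : Submodule F (Fin n → F)} {i : Fin n}

lemma mem_coordHyp {v : Fin n → F} : v ∈ coordHyp F n i ↔ v i = 0 :=
  Iff.rfl

lemma exists_not_le_coordHyp (hX : X ≠ ⊥) : ∃ i, ¬ X ≤ coordHyp F n i := by
  obtain ⟨x, hxX, hx⟩ := Submodule.exists_mem_ne_zero_of_ne_bot hX
  obtain ⟨i, hi⟩ := Function.ne_iff.mp hx
  exact ⟨i, fun hle => hi (hle hxX)⟩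

lemma sup_span_singleton_mem_scOf (hXk : Module.finrank F X + 1 = k) {v : Fin n → F}
    (hvX : v ∉ X) (hv : ∀ i, X ≤ coordHyp F n i → v i ≠ 0) :
    X ⊔ Submodule.span F {v} ∈ scOf F n k X := by
  have hdim : Module.finrank F ↥(X ⊔ Submodule.span F {v}) = k := by
    rw [Submodule.finrank_sup_span_singleton hvX, hXk]
  refine ⟨⟨hdim, le_sup_left⟩, hdim, fun i hi => ?_⟩
  rw [sup_le_iff, Submodule.span_singleton_le_iff_mem] at hi
  exact hv i hi.1 hi.2

lemma scOf_nonempty (hXk : Module.finrank F X + 1 = k) (hX : X ≠ ⊤) :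
    (scOf F n k X).Nonempty := by
  by_cases h1 : (1 : Fin n → F) ∈ X
  · obtain ⟨v, -, hv⟩ := SetLike.exists_of_lt hX.lt_top
    exact ⟨_, sup_span_singleton_mem_scOf hXk hv fun i hi => absurd (hi h1) one_ne_zero⟩
  · exact ⟨_, sup_span_singleton_mem_scOf hXk h1 fun _ _ => one_ne_zero⟩

lemma mem_sSup_scOf (hXk : Module.finrank F X + 1 = k) (hX : X ≠ ⊤) {v : Fin n → F}
    (hv : ∀ i, X ≤ coordHyp F n i → v i ≠ 0) : v ∈ sSup (scOf F n k X) := by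
  by_cases hvX : v ∈ X
  · obtain ⟨Z, hZ⟩ := scOf_nonempty hXk hX
    exact le_sSup hZ (hZ.1.2 hvX)
  · exact le_sSup (sup_span_singleton_mem_scOf hXk hvX hv)
      (Submodule.mem_sup_right (Submodule.mem_span_singleton_self v))

lemma single_mem_sSup_scOf (hXk : Module.finrank F X + 1 = k) (hX : X ≠ ⊤)
    (hi : ¬ X ≤ coordHyp F n i) : Pi.single i 1 ∈ sSup (scOf F n k X) := by
  have h_one : (1 : Fin n → F) ∈ sSup (scOf F n k X) :=
    mem_sSup_scOf hXk hX fun _ _ => one_ne_zero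
  have h_add : 1 + Pi.single i 1 ∈ sSup (scOf F n k X) := by
    refine mem_sSup_scOf hXk hX fun j hj => ?_
    have hji : j ≠ i := fun h => hi (h ▸ hj)
    simp [hji]
  simpa using Submodule.sub_mem _ h_add h_one

lemma ker_inf_mem_tcOf (hY : Y ∈ ndCodes F n (k + 1)) (hiY : Pi.single i 1 ∈ Y)
    {f : Module.Dual F (Fin n → F)} (hfi : f (Pi.single i 1) = 1) (hf : ∃ y ∈ Y, f y ≠ y i) :
    LinearMap.ker f ⊓ Y ∈ tcOf F n k Y := by
  have hdim : Module.finrank F ↥(LinearMap.ker f ⊓ Y) = k := by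
    have hYf : ¬ Y ≤ LinearMap.ker f := fun hle => one_ne_zero (hfi.symm.trans (hle hiY))
    exact Nat.succ_injective ((finrank_ker_inf_add_one hYf).trans hY.1)
  refine ⟨⟨hdim, inf_le_right⟩, hdim, fun j hj => ?_⟩
  have hcoord : ∀ y ∈ Y, y j = f y * (Pi.single i 1 : Fin n → F) j := by
    intro y hy
    have hmem : y - f y • Pi.single i 1 ∈ LinearMap.ker f ⊓ Y :=
      ⟨by simp [hfi], Y.sub_mem hy (Y.smul_mem _ hiY)⟩
    exact sub_eq_zero.mp (hj hmem)
  obtain rfl | hji := eq_or_ne j i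
  · obtain ⟨y, hy, hne⟩ := hf
    exact hne (by simpa using (hcoord y hy).symm)
  · exact hY.2 j fun y hy => mem_coordHyp.mpr (by simpa [hji] using hcoord y hy)

lemma exists_mem_tcOf_not_le (hY : Y ∈ ndCodes F n (k + 1)) (hXk : Module.finrank F X < k)
    (hi : ¬ X ≤ coordHyp F n i) (hiY : Pi.single i 1 ∈ Y) :
    ∃ Z ∈ tcOf F n k Y, ¬ X ≤ Z := by
  let W := X ⊔ Submodule.span F {(Pi.single i 1 : Fin n → F)}
  have hWY : Module.finrank F W < Module.finrank F Y := by
    have hspan : Module.finrank F (Submodule.span F {(Pi.single i 1 : Fin n → F)}) = 1 :=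
      finrank_span_singleton (by simp)
    calc Module.finrank F W
        ≤ Module.finrank F X + 1 := hspan ▸ Submodule.finrank_add_le_finrank_add_finrank _ _
      _ < k + 1 := Nat.succ_lt_succ hXk
      _ = Module.finrank F Y := hY.1.symm
  obtain ⟨g, hWg, hYg⟩ := exists_dual_le_ker_and_not_le_ker_of_finrank_lt hWY
  rw [sup_le_iff, Submodule.span_singleton_le_iff_mem, LinearMap.mem_ker] at hWg
  obtain ⟨hXg, hgi⟩ := hWg
  obtain ⟨x, hxX, hxi⟩ := SetLike.not_le_iff_exists.mp hi
  obtain ⟨y, hyY, hgy⟩ := SetLike.not_le_iff_exists.mp hYg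
  let f : Module.Dual F (Fin n → F) := LinearMap.proj i + g
  have hfi : f (Pi.single i 1) = 1 := by simp [f, hgi]
  have hfx : f x = x i := by simp [f, LinearMap.mem_ker.mp (hXg hxX)]
  have hfy : f y ≠ y i := by simpa [f] using hgy
  exact ⟨_, ker_inf_mem_tcOf hY hiY hfi ⟨y, hyY, hfy⟩,
    fun hle => hxi (hfx.symm.trans (hle hxX).1)⟩

theorem stmt_4_general (hk : 1 < k) (hX : Module.finrank F X = k - 1)
    (hY : Module.finrank F Y = k + 1) : scOf F n k X ≠ tcOf F n k Y := by
  intro h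
  have hXk : Module.finrank F X + 1 = k := by omega
  have hX_ne_bot : X ≠ ⊥ := by
    rintro rfl
    rw [finrank_bot] at hX
    omega
  have hX_ne_top : X ≠ ⊤ := by
    rintro rfl
    have := Submodule.finrank_mono (le_top : Y ≤ ⊤)
    omega
  have hsup : sSup (scOf F n k X) ≤ Y := sSup_le fun Z hZ => (h.subset hZ).1.2
  have hYnd : Y ∈ ndCodes F n (k + 1) := by
    obtain ⟨Z, hZ⟩ := scOf_nonempty hXk hX_ne_top
    exact ⟨hY, fun i hi => hZ.2.2 i (((le_sSup hZ).trans hsup).trans hi)⟩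
  obtain ⟨i, hi⟩ := exists_not_le_coordHyp hX_ne_bot
  have hiY : Pi.single i 1 ∈ Y := hsup (single_mem_sSup_scOf hXk hX_ne_top hi)
  obtain ⟨Z, hZY, hXZ⟩ := exists_mem_tcOf_not_le hYnd (by omega) hi hiY
  exact hXZ (h.superset hZY).1.2

end Codes

/-- If `S^c(X)` is a maximal clique of `Γ(n,k)_q` for a `(k-1)`-dimensional
subspace `X`, then there is no `(k+1)`-dimensional subspace `Y` with `S^c(X) = T^c(Y)`. -/
theorem stmt_4 (q n k : ℕ) (F : Type*) [Field F] [Fintype F]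
    (hF : Fintype.card F = q) (hk : 1 < k) (hkn : k < n - 1)
    (X : Submodule F (Fin n → F)) (hX : Module.finrank F ↥X = k - 1)
    (hmax : isMaxClique F n k (scOf F n k X)) :
    ¬ ∃ Y : Submodule F (Fin n → F),
        Module.finrank F ↥Y = k + 1 ∧ scOf F n k X = tcOf F n k Y := by
  rintro ⟨Y, hY, h⟩
  exact stmt_4_general hk hX hY h
end

section
/- Let q be a prime power, 1 < k < n−1, and let f : C(n,k)_q → G_k(V) be an injective map such that f(X) and f(Y) are adjacent whenever X, Y ∈ C(n,k)_q are adjacent. Then one of the following holds: (a) for every X ∈ C(n,k−1)_q there exists a (k−1)-dimensional subspace X' ⊂ V with f(S(X)) = S(X'); or (b) n = 2k and for every X ∈ C(n,k−1)_q there exists a (k+1)-dimensional subspace Y' ⊂ V with f(S(X)) = T(Y'). -/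
/-!
Write `k = m + 1`. Every star `S(X)` with `X ∈ C(n, m)_q` is a clique, so its image lies in a star
or in a top, and comparing cardinalities turns these inclusions into equalities (for tops, as soon
as `n ≥ 2k`).

The two cases cannot be mixed. Suppose `X₁` and `X₂` are adjacent, `f(S(X₁)) ⊆ S(X')` and
`f(S(X₂)) ⊆ T(Y')`. The members of `S(X₁)` mapped below `Y'` inject into the line `[X', Y']`. Each
other member `P` is adjacent to all of the line `[X₂, P + X₂]`, which forces that line onto
`[X', Y']`; hence `P + X₂` does not depend on `P`, and these `P` lie on a single line as well. So
`q² + q + 1 ≤ |S(X₁)| ≤ 2(q + 1)`, which is absurd. Since all codes are connected through codes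
containing the all-ones vector, either all stars go to stars or all go to tops.

If a star goes into a top, then `|S(X)| ≤ |T(Y')|` gives `n ≤ 2k`. If moreover `n < 2k`, then
`T^c(Y)` is too large to fit in a star for any `Y ∈ C(n, k + 1)_q`, so `f` sends it into a top,
which is `T(Y')` whenever `X ⊆ Y`, since the two tops share the image of the line `[X, Y]`. But two
such sets `T^c(Y₁)` and `T^c(Y₂)` do not fit into `T(Y')` together.
-/

open Module Relation

section GaussNum

theorem gaussNum_succ (q d : ℕ) : gaussNum q (d + 1) = gaussNum q d + q ^ d :=
  Finset.sum_range_succ _ _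

theorem gaussNum_two (q : ℕ) : gaussNum q 2 = q + 1 := by
  simp [gaussNum, Finset.sum_range_succ, add_comm]

theorem gaussNum_three (q : ℕ) : gaussNum q 3 = q ^ 2 + q + 1 := by
  rw [gaussNum_succ, gaussNum_two]
  ring

theorem gaussNum_strictMono {q : ℕ} (hq : 0 < q) : StrictMono (gaussNum q) :=
  strictMono_nat_of_lt_succ fun d => by
    rw [gaussNum_succ]
    exact Nat.lt_add_of_pos_right (pow_pos hq d)

theorem two_pow_le_gaussNum_add_one {q : ℕ} (hq : 2 ≤ q) (d : ℕ) : 2 ^ d ≤ gaussNum q d + 1 := by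
  induction d with
  | zero => simp
  | succ d ih =>
    have := Nat.pow_le_pow_left hq d
    rw [gaussNum_succ, pow_succ]
    omega

theorem add_two_le_two_pow {m : ℕ} (hm : 2 ≤ m) : m + 2 ≤ 2 ^ m := by
  obtain ⟨d, rfl⟩ := Nat.exists_eq_add_of_le' (one_le_two.trans hm)
  have := Nat.lt_two_pow_self (n := d)
  rw [pow_succ]
  omega

theorem four_mul_add_seven_le_gaussNum {q m : ℕ} (hq : 2 ≤ q) (hm : 2 ≤ m) :
    4 * m + 7 ≤ gaussNum q (m + 2) := by
  have hpow := add_two_le_two_pow hm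
  have hgauss := two_pow_le_gaussNum_add_one hq (m + 2)
  rw [pow_add] at hgauss
  omega

end GaussNum

section Grassmann

variable {K V : Type*} [DivisionRing K] [AddCommGroup V] [Module K V]

/-- The `k`-dimensional subspaces lying between `X` and `Y`. For `Y = ⊤` and `dim X = k - 1` this
is the star of `X`, for `X = ⊥` and `dim Y = k + 1` the top of `Y`, and for `dim X = k - 1`,
`dim Y = k + 1` a line of the Grassmann space. -/
def grassmannInterval (k : ℕ) (X Y : Submodule K V) : Set (Submodule K V) :=
  {P | finrank K P = k ∧ X ≤ P ∧ P ≤ Y}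

theorem grassmannInterval_subset {k : ℕ} {X X' Y Y' : Submodule K V} (hX : X' ≤ X) (hY : Y ≤ Y') :
    grassmannInterval k X Y ⊆ grassmannInterval k X' Y' :=
  fun _ hP => ⟨hP.1, hX.trans hP.2.1, hP.2.2.trans hY⟩

/-- Adjacency of `m`-dimensional subspaces restricted to a set `D` of them: the edge relation of
the subgraph of the Grassmann graph induced on `D`. -/
def AdjWithin (D : Set (Submodule K V)) (m : ℕ) (P Q : Submodule K V) : Prop :=
  P ∈ D ∧ Q ∈ D ∧ finrank K ↥(P ⊓ Q) + 1 = m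

instance AdjWithin.symm (D : Set (Submodule K V)) (m : ℕ) : Std.Symm (AdjWithin D m) :=
  ⟨fun P Q ⟨hP, hQ, h⟩ => ⟨hQ, hP, inf_comm P Q ▸ h⟩⟩

theorem AdjWithin.mono {D D' : Set (Submodule K V)} (h : D ⊆ D') {m : ℕ} {P Q : Submodule K V}
    (hPQ : AdjWithin D m P Q) : AdjWithin D' m P Q :=
  ⟨h hPQ.1, h hPQ.2.1, hPQ.2.2⟩

theorem inf_sup_span_singleton_eq {A X : Submodule K V} {x : V} (hAX : A ≤ X) (hx : x ∉ X) :
    X ⊓ (A ⊔ K ∙ x) = A := by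
  rw [inf_comm, sup_inf_assoc_of_le _ hAX, inf_comm,
    (Submodule.disjoint_span_singleton_of_notMem hx).eq_bot, sup_bot_eq]

variable [FiniteDimensional K V] {k m : ℕ} {A B P Q U X Y Z : Submodule K V}

theorem grassmannInterval_nonempty (hXY : X ≤ Y) (hX : finrank K X ≤ k) (hY : k ≤ finrank K Y) :
    (grassmannInterval k X Y).Nonempty := by
  induction k, hX using Nat.le_induction with
  | base => exact ⟨X, rfl, le_rfl, hXY⟩
  | succ k _ ih =>
    obtain ⟨P, hP, hXP, hPY⟩ := ih (by omega)
    have hYP : ¬ Y ≤ P := fun h => by have := Submodule.finrank_mono h; omega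
    obtain ⟨y, hyY, hyP⟩ := SetLike.not_le_iff_exists.1 hYP
    exact ⟨P ⊔ K ∙ y, by rw [Submodule.finrank_sup_span_singleton hyP, hP],
      hXP.trans le_sup_left, sup_le hPY (by simpa using hyY)⟩

theorem grassmannInterval_nontrivial (hXY : X ≤ Y) (hX : finrank K X = m)
    (hY : m + 2 ≤ finrank K Y) : (grassmannInterval (m + 1) X Y).Nontrivial := by
  obtain ⟨P, hP⟩ := grassmannInterval_nonempty (k := m + 1) hXY (by omega) (by omega)
  have hYP : ¬ Y ≤ P := fun h => by have := Submodule.finrank_mono h; have := hP.1; omega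
  obtain ⟨y, hyY, hyP⟩ := SetLike.not_le_iff_exists.1 hYP
  refine ⟨P, hP, X ⊔ K ∙ y, ⟨?_, le_sup_left, sup_le hXY (by simpa using hyY)⟩, fun h => hyP ?_⟩
  · rw [Submodule.finrank_sup_span_singleton fun h => hyP (hP.2.1 h), hX]
  · exact h ▸ Submodule.mem_sup_right (Submodule.mem_span_singleton_self y)

theorem sup_eq_of_mem_grassmannInterval (hA : A ∈ grassmannInterval k X Y)
    (hB : B ∈ grassmannInterval k X Y) (hAB : A ≠ B) (hY : finrank K Y = k + 1) : A ⊔ B = Y := by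
  refine Submodule.eq_of_le_of_finrank_le (sup_le hA.2.2 hB.2.2) ?_
  have hlt : A < A ⊔ B := left_lt_sup.2 fun h =>
    hAB (Submodule.eq_of_le_of_finrank_eq h (hB.1.trans hA.1.symm)).symm
  have := Submodule.finrank_lt_finrank_of_lt hlt
  rw [hA.1] at this
  omega

theorem inf_eq_of_mem_grassmannInterval (hA : A ∈ grassmannInterval (k + 1) X Y)
    (hB : B ∈ grassmannInterval (k + 1) X Y) (hAB : A ≠ B) (hX : finrank K X = k) : A ⊓ B = X := by
  refine (Submodule.eq_of_le_of_finrank_le (le_inf hA.2.1 hB.2.1) ?_).symm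
  have hlt : A ⊓ B < A := inf_lt_left.2 fun h =>
    hAB (Submodule.eq_of_le_of_finrank_eq h (hA.1.trans hB.1.symm))
  have := Submodule.finrank_lt_finrank_of_lt hlt
  rw [hA.1] at this
  omega

theorem pairwise_grassmannInterval_of_finrank_left (hX : finrank K X = m) :
    (grassmannInterval (m + 1) X Y).Pairwise fun P Q => finrank K ↥(P ⊓ Q) = m :=
  fun P hP Q hQ hPQ => by
    beta_reduce
    rw [inf_eq_of_mem_grassmannInterval hP hQ hPQ hX, hX]

theorem pairwise_grassmannInterval_of_finrank_right (hY : finrank K Y = m + 2) :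
    (grassmannInterval (m + 1) X Y).Pairwise fun P Q => finrank K ↥(P ⊓ Q) = m := by
  intro P hP Q hQ hPQ
  have hdim := Submodule.finrank_sup_add_finrank_inf_eq P Q
  rw [sup_eq_of_mem_grassmannInterval hP hQ hPQ hY, hY, hP.1, hQ.1] at hdim
  omega

theorem eq_of_nontrivial_of_subset_grassmannInterval {S : Set (Submodule K V)} (hS : S.Nontrivial)
    (hSY : S ⊆ grassmannInterval k X Y) (hSZ : S ⊆ grassmannInterval k X Z)
    (hY : finrank K Y = k + 1) (hZ : finrank K Z = k + 1) : Y = Z := by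
  obtain ⟨A, hA, B, hB, hAB⟩ := hS
  rw [← sup_eq_of_mem_grassmannInterval (hSY hA) (hSY hB) hAB hY,
    sup_eq_of_mem_grassmannInterval (hSZ hA) (hSZ hB) hAB hZ]

theorem le_of_finrank_inf_eq (hX : finrank K X = m) (hP : finrank K P = m + 1) (hXP : X ≤ P)
    (hXY : X ≤ Y) (hPY : ¬ P ≤ Y) (hQY : Q ≤ Y) (hPQ : finrank K ↥(P ⊓ Q) = m) : X ≤ Q := by
  have hlt := Submodule.finrank_lt_finrank_of_lt (inf_lt_left.2 hPY)
  have hXinf : X = P ⊓ Y :=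
    Submodule.eq_of_le_of_finrank_le (le_inf hXP hXY) (by omega)
  have hPQinf : P ⊓ Q = P ⊓ Y :=
    Submodule.eq_of_le_of_finrank_le (inf_le_inf_left P hQY) (by omega)
  exact hXinf.trans_le (hPQinf ▸ inf_le_right)

section Clique

variable {C : Set (Submodule K V)}

theorem le_sup_of_not_inf_le (hA : finrank K ↥(P ⊓ A) = m) (hB : finrank K ↥(P ⊓ B) = m)
    (hP : finrank K P = m + 1) (hAB : finrank K ↥(A ⊓ B) = m) (hABP : ¬ A ⊓ B ≤ P) :
    P ≤ A ⊔ B := by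
  have hne : P ⊓ A ≠ P ⊓ B := fun h => by
    have hle : P ⊓ A ≤ A ⊓ B := le_inf inf_le_right (h ▸ inf_le_right)
    exact hABP (Submodule.eq_of_le_of_finrank_eq hle (hA.trans hAB.symm) ▸ inf_le_left)
  rw [← sup_eq_of_mem_grassmannInterval ⟨hA, bot_le, inf_le_left⟩ ⟨hB, bot_le, inf_le_left⟩ hne hP]
  exact sup_le_sup inf_le_right inf_le_right

theorem subset_star_or_subset_top_of_pairwise (hC : ∀ P ∈ C, finrank K P = m + 1)
    (hadj : C.Pairwise fun P Q => finrank K ↥(P ⊓ Q) = m) (hnt : C.Nontrivial) :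
    (∃ X : Submodule K V, finrank K X = m ∧ C ⊆ grassmannInterval (m + 1) X ⊤) ∨
      ∃ Y : Submodule K V, finrank K Y = m + 2 ∧ C ⊆ grassmannInterval (m + 1) ⊥ Y := by
  obtain ⟨A, hA, B, hB, hAB⟩ := hnt
  have hinf := hadj hA hB hAB
  by_cases hall : ∀ P ∈ C, A ⊓ B ≤ P
  · exact Or.inl ⟨A ⊓ B, hinf, fun P hP => ⟨hC P hP, hall P hP, le_top⟩⟩
  push Not at hall
  obtain ⟨D, hD, hABD⟩ := hall
  have hle_of_not {P} (hP : P ∈ C) (hABP : ¬ A ⊓ B ≤ P) : P ≤ A ⊔ B :=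
    le_sup_of_not_inf_le (hadj hP hA fun h => hABP (h ▸ inf_le_left))
      (hadj hP hB fun h => hABP (h ▸ inf_le_right)) (hC P hP) hinf hABP
  refine Or.inr ⟨A ⊔ B, ?_, fun P hP => ⟨hC P hP, bot_le, ?_⟩⟩
  · have := Submodule.finrank_sup_add_finrank_inf_eq A B
    have := hC A hA
    have := hC B hB
    omega
  by_cases hABP : A ⊓ B ≤ P
  · have hPD : finrank K ↥(P ⊓ D) = m := hadj hP hD fun h => hABD (h ▸ hABP)
    have hne : A ⊓ B ≠ P ⊓ D := fun h => hABD (h ▸ inf_le_right)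
    rw [← sup_eq_of_mem_grassmannInterval ⟨hinf, bot_le, hABP⟩ ⟨hPD, bot_le, inf_le_left⟩ hne
      (hC P hP)]
    exact sup_le (inf_le_left.trans le_sup_left) (inf_le_right.trans (hle_of_not hD hABD))
  · exact hle_of_not hP hABP

end Clique

theorem reflTransGen_adjWithin_star (hX : X ∈ grassmannInterval m U ⊤)
    (hY : Y ∈ grassmannInterval m U ⊤) :
    ReflTransGen (AdjWithin (grassmannInterval m U ⊤) m) X Y := by
  induction hd : m - finrank K ↥(X ⊓ Y) using Nat.strong_induction_on generalizing X with
  | _ d ih =>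
  by_cases hYX : Y ≤ X
  · rw [Submodule.eq_of_le_of_finrank_eq hYX (hY.1.trans hX.1.symm)]
  obtain ⟨y, hyY, hyX⟩ := SetLike.not_le_iff_exists.1 hYX
  have hinf : finrank K ↥(X ⊓ Y) < m := by
    have := Submodule.finrank_lt_finrank_of_lt (inf_lt_right.2 hYX)
    rwa [hY.1] at this
  obtain ⟨A, hA, hinfA, hAX⟩ : (grassmannInterval (m - 1) (X ⊓ Y) X).Nonempty :=
    grassmannInterval_nonempty inf_le_left (by omega) (by rw [hX.1]; omega)
  have hZ : A ⊔ K ∙ y ∈ grassmannInterval m U ⊤ := by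
    refine ⟨?_, (le_inf hX.2.1 hY.2.1).trans (hinfA.trans le_sup_left), le_top⟩
    rw [Submodule.finrank_sup_span_singleton fun h => hyX (hAX h), hA]
    omega
  have hy : y ∈ A ⊔ K ∙ y := Submodule.mem_sup_right (Submodule.mem_span_singleton_self y)
  have hlt : X ⊓ Y < (A ⊔ K ∙ y) ⊓ Y :=
    lt_of_le_not_ge (le_inf (hinfA.trans le_sup_left) inf_le_right) fun h => hyX (h ⟨hy, hyY⟩).1
  have := Submodule.finrank_lt_finrank_of_lt hlt
  refine ReflTransGen.head ⟨hX, hZ, ?_⟩ (ih _ (by omega) hZ rfl)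
  rw [inf_sup_span_singleton_eq hAX hyX]
  omega

end Grassmann

section Counting

variable {K V : Type*} [Field K] [AddCommGroup V] [Module K V]

variable (K V) in
theorem ncard_setOf_finrank_eq_one [Finite K] :
    {P : Submodule K V | finrank K P = 1}.ncard = gaussNum (Nat.card K) (finrank K V) := by
  rw [gaussNum, ← Projectivization.card_of_finrank K V rfl,
    Nat.card_congr (Projectivization.equivSubmodule K V)]
  rfl

variable {k m : ℕ} {X Y : Submodule K V}

theorem map_subtype_submoduleOf (hXY : X ≤ Y) : (X.submoduleOf Y).map Y.subtype = X := by
  rw [Submodule.submoduleOf, Submodule.map_comap_subtype, inf_eq_right.2 hXY]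

theorem finrank_submoduleOf (hXY : X ≤ Y) : finrank K (X.submoduleOf Y) = finrank K X := by
  rw [← Submodule.finrank_map_subtype_eq, map_subtype_submoduleOf hXY]

variable [FiniteDimensional K V]

theorem finrank_quotient_submoduleOf (hXY : X ≤ Y) :
    finrank K (Y ⧸ X.submoduleOf Y) = finrank K Y - finrank K X := by
  rw [Submodule.finrank_quotient, finrank_submoduleOf hXY]

theorem finrank_comap_mkQ (X : Submodule K V) (Q : Submodule K (V ⧸ X)) :
    finrank K (Q.comap X.mkQ) = finrank K Q + finrank K X := by
  have h := (Submodule.quotientQuotientEquivQuotient X (Q.comap X.mkQ)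
    (Submodule.le_comap_mkQ X Q)).finrank_eq
  rw [Submodule.map_comap_eq_of_surjective X.mkQ_surjective] at h
  have := Submodule.finrank_quotient_add_finrank (Q.comap X.mkQ)
  have := Submodule.finrank_quotient_add_finrank Q
  have := Submodule.finrank_quotient_add_finrank X
  omega

theorem ncard_grassmannInterval_eq_ncard_quotient (hXY : X ≤ Y) :
    (grassmannInterval (k + finrank K X) X Y).ncard =
      {Q : Submodule K (Y ⧸ X.submoduleOf Y) | finrank K Q = k}.ncard := by
  have hmap := map_subtype_submoduleOf hXY
  have hdim (Q : Submodule K (Y ⧸ X.submoduleOf Y)) :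
      finrank K ((Q.comap (X.submoduleOf Y).mkQ).map Y.subtype) = finrank K Q + finrank K X := by
    rw [Submodule.finrank_map_subtype_eq, finrank_comap_mkQ, finrank_submoduleOf hXY]
  symm
  refine Set.ncard_congr (fun Q _ => (Q.comap (X.submoduleOf Y).mkQ).map Y.subtype) ?_ ?_ ?_
  · rintro Q rfl
    refine ⟨hdim Q, ?_, Submodule.map_subtype_le _ _⟩
    conv_lhs => rw [← hmap]
    exact Submodule.map_mono (Submodule.le_comap_mkQ _ Q)
  · intro P Q _ _ h
    exact Submodule.comap_injective_of_surjective (Submodule.mkQ_surjective _)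
      (Submodule.map_injective_of_injective Y.injective_subtype h)
  · rintro P ⟨hP, hXP, hPY⟩
    have hinv : (((P.submoduleOf Y).map (X.submoduleOf Y).mkQ).comap
        (X.submoduleOf Y).mkQ).map Y.subtype = P := by
      rw [Submodule.comap_map_mkQ, Submodule.map_sup, hmap, map_subtype_submoduleOf hPY,
        sup_eq_right.2 hXP]
    refine ⟨(P.submoduleOf Y).map (X.submoduleOf Y).mkQ, ?_, hinv⟩
    have := hdim ((P.submoduleOf Y).map (X.submoduleOf Y).mkQ)
    rw [hinv, hP] at this
    exact (Nat.add_right_cancel this).symm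

variable [Finite K]

instance finite_submodule : Finite (Submodule K V) :=
  have := Module.finite_of_finite K (M := V)
  inferInstance

variable (K V) in
theorem ncard_setOf_finrank_add_one_eq :
    {P : Submodule K V | finrank K P + 1 = finrank K V}.ncard =
      gaussNum (Nat.card K) (finrank K V) := by
  rw [← Subspace.dual_finrank_eq (K := K) (V := V), ← ncard_setOf_finrank_eq_one]
  refine Set.ncard_congr (fun P _ => P.dualAnnihilator) ?_ ?_ ?_
  · intro P hP
    have := Subspace.finrank_add_finrank_dualAnnihilator_eq P
    simp only [Set.mem_ofPred_eq, Subspace.dual_finrank_eq] at hP ⊢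
    omega
  · intro P Q _ _ h
    exact Subspace.dualAnnihilator_inj.1 h
  · intro Q hQ
    have := Subspace.finrank_add_finrank_dualAnnihilator_eq Q.dualCoannihilator
    rw [Subspace.dualCoannihilator_dualAnnihilator_eq] at this
    simp only [Set.mem_ofPred_eq] at hQ
    refine ⟨Q.dualCoannihilator, ?_, Subspace.dualCoannihilator_dualAnnihilator_eq⟩
    simp only [Set.mem_ofPred_eq, Subspace.dual_finrank_eq]
    omega

theorem ncard_grassmannInterval_of_finrank_left (hXY : X ≤ Y) (hX : finrank K X = m) :
    (grassmannInterval (m + 1) X Y).ncard = gaussNum (Nat.card K) (finrank K Y - m) := by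
  subst hX
  rw [add_comm, ncard_grassmannInterval_eq_ncard_quotient hXY, ncard_setOf_finrank_eq_one,
    finrank_quotient_submoduleOf hXY]

theorem ncard_grassmannInterval_bot (hY : finrank K Y = k + 1) :
    (grassmannInterval k ⊥ Y).ncard = gaussNum (Nat.card K) (k + 1) := by
  have hdim : finrank K (Y ⧸ (⊥ : Submodule K V).submoduleOf Y) = k + 1 := by
    rw [finrank_quotient_submoduleOf bot_le, finrank_bot, hY, Nat.sub_zero]
  have h := ncard_grassmannInterval_eq_ncard_quotient (k := k) (bot_le (a := Y))
  rw [finrank_bot, add_zero] at h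
  rw [h, ← hdim, ← ncard_setOf_finrank_add_one_eq, hdim]
  simp only [Nat.add_right_cancel_iff]

theorem ncard_line (hXY : X ≤ Y) (hX : finrank K X = m) (hY : finrank K Y = m + 2) :
    (grassmannInterval (m + 1) X Y).ncard = Nat.card K + 1 := by
  rw [ncard_grassmannInterval_of_finrank_left hXY hX, hY, Nat.add_sub_cancel_left, gaussNum_two]

end Counting

section AdjInjection

variable {K V W : Type*} [DivisionRing K] [AddCommGroup V] [Module K V] [AddCommGroup W]
  [Module K W]

/-- An injective adjacency-preserving map on a set `D` of `(m + 1)`-dimensional subspaces of `V`,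
with values in the `(m + 1)`-dimensional subspaces of `W`. The map is defined on all subspaces,
but only its values on `D` are constrained. -/
structure IsAdjInjection (m : ℕ) (D : Set (Submodule K V)) (f : Submodule K V → Submodule K W) :
    Prop where
  finrank_eq : ∀ P ∈ D, finrank K P = m + 1
  finrank_map : ∀ P ∈ D, finrank K (f P) = m + 1
  injOn : Set.InjOn f D
  adj : ∀ P ∈ D, ∀ Q ∈ D, finrank K ↥(P ⊓ Q) = m → finrank K ↥(f P ⊓ f Q) = m

namespace IsAdjInjection

variable [FiniteDimensional K W] {m : ℕ} {C D : Set (Submodule K V)}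
  {f : Submodule K V → Submodule K W} {X : Submodule K V}

theorem image_subset_star_or_subset_top (hf : IsAdjInjection m D f) (hC : C ⊆ D)
    (hadj : C.Pairwise fun P Q => finrank K ↥(P ⊓ Q) = m) (hnt : C.Nontrivial) :
    (∃ X' : Submodule K W, finrank K X' = m ∧ f '' C ⊆ grassmannInterval (m + 1) X' ⊤) ∨
      ∃ Y' : Submodule K W, finrank K Y' = m + 2 ∧ f '' C ⊆ grassmannInterval (m + 1) ⊥ Y' := by
  refine subset_star_or_subset_top_of_pairwise ?_ ?_ (hnt.image_of_injOn (hf.injOn.mono hC))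
  · rintro _ ⟨P, hP, rfl⟩
    exact hf.finrank_map P (hC hP)
  · rintro _ ⟨P, hP, rfl⟩ _ ⟨Q, hQ, rfl⟩ hne
    exact hf.adj P (hC hP) Q (hC hQ) (hadj hP hQ (ne_of_apply_ne f hne))

variable [FiniteDimensional K V]

theorem image_star_subset_star_or_subset_top (hf : IsAdjInjection m D f) (hX : finrank K X = m)
    (hXD : grassmannInterval (m + 1) X ⊤ ⊆ D) (hV : m + 2 ≤ finrank K V) :
    (∃ X' : Submodule K W, finrank K X' = m ∧
        f '' grassmannInterval (m + 1) X ⊤ ⊆ grassmannInterval (m + 1) X' ⊤) ∨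
      ∃ Y' : Submodule K W, finrank K Y' = m + 2 ∧
        f '' grassmannInterval (m + 1) X ⊤ ⊆ grassmannInterval (m + 1) ⊥ Y' :=
  hf.image_subset_star_or_subset_top hXD (pairwise_grassmannInterval_of_finrank_left hX)
    (grassmannInterval_nontrivial le_top hX (by rwa [finrank_top]))

end IsAdjInjection
end AdjInjection

section AdjInjectionFinite

variable {K V W : Type*} [Field K] [Finite K] [AddCommGroup V] [Module K V] [AddCommGroup W]
  [Module K W] [FiniteDimensional K W] {m : ℕ} {C D : Set (Submodule K V)}
  {f : Submodule K V → Submodule K W} {X X₁ X₂ P Q : Submodule K V} {X' Y' : Submodule K W}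

namespace IsAdjInjection

theorem image_eq_of_ncard_le (hf : IsAdjInjection m D f) {E : Set (Submodule K W)} (hC : C ⊆ D)
    (hCE : f '' C ⊆ E) (hcard : E.ncard ≤ C.ncard) : f '' C = E :=
  Set.eq_of_subset_of_ncard_le hCE (by rwa [(hf.injOn.mono hC).ncard_image])

theorem ncard_le_of_image_subset (hf : IsAdjInjection m D f) {E : Set (Submodule K W)} (hC : C ⊆ D)
    (hCE : f '' C ⊆ E) : C.ncard ≤ E.ncard := by
  rw [← (hf.injOn.mono hC).ncard_image]
  exact Set.ncard_le_ncard hCE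

theorem ncard_setOf_map_le (hf : IsAdjInjection m D f) (hXD : grassmannInterval (m + 1) X ⊤ ⊆ D)
    (hX' : finrank K X' = m) (hXY' : X' ≤ Y') (hY' : finrank K Y' = m + 2)
    (hstar : f '' grassmannInterval (m + 1) X ⊤ ⊆ grassmannInterval (m + 1) X' ⊤) :
    {P ∈ grassmannInterval (m + 1) X ⊤ | f P ≤ Y'}.ncard ≤ Nat.card K + 1 := by
  rw [← ncard_line hXY' hX' hY']
  refine hf.ncard_le_of_image_subset ((Set.sep_subset _ _).trans hXD) ?_
  rintro _ ⟨P, ⟨hP, hPY'⟩, rfl⟩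
  have hfP := hstar ⟨P, hP, rfl⟩
  exact ⟨hfP.1, hfP.2.1, hPY'⟩

variable [FiniteDimensional K V]

theorem image_star_eq_star (hf : IsAdjInjection m D f) (hVW : finrank K W ≤ finrank K V)
    (hX : finrank K X = m) (hXD : grassmannInterval (m + 1) X ⊤ ⊆ D) (hX' : finrank K X' = m)
    (h : f '' grassmannInterval (m + 1) X ⊤ ⊆ grassmannInterval (m + 1) X' ⊤) :
    f '' grassmannInterval (m + 1) X ⊤ = grassmannInterval (m + 1) X' ⊤ := by
  refine hf.image_eq_of_ncard_le hXD h ?_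
  rw [ncard_grassmannInterval_of_finrank_left le_top hX,
    ncard_grassmannInterval_of_finrank_left le_top hX', finrank_top, finrank_top]
  exact (gaussNum_strictMono Nat.card_pos).monotone (Nat.sub_le_sub_right hVW m)

theorem finrank_le_of_image_star_subset_top (hf : IsAdjInjection m D f) (hX : finrank K X = m)
    (hXD : grassmannInterval (m + 1) X ⊤ ⊆ D) (hY' : finrank K Y' = m + 2)
    (h : f '' grassmannInterval (m + 1) X ⊤ ⊆ grassmannInterval (m + 1) ⊥ Y') :
    finrank K V ≤ 2 * (m + 1) := by
  have hcard := hf.ncard_le_of_image_subset hXD h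
  rw [ncard_grassmannInterval_of_finrank_left le_top hX, ncard_grassmannInterval_bot hY',
    finrank_top, (gaussNum_strictMono Nat.card_pos).le_iff_le] at hcard
  omega

theorem image_star_eq_top (hf : IsAdjInjection m D f) (hV : 2 * (m + 1) ≤ finrank K V)
    (hX : finrank K X = m) (hXD : grassmannInterval (m + 1) X ⊤ ⊆ D) (hY' : finrank K Y' = m + 2)
    (h : f '' grassmannInterval (m + 1) X ⊤ ⊆ grassmannInterval (m + 1) ⊥ Y') :
    f '' grassmannInterval (m + 1) X ⊤ = grassmannInterval (m + 1) ⊥ Y' := by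
  refine hf.image_eq_of_ncard_le hXD h ?_
  rw [ncard_grassmannInterval_of_finrank_left le_top hX, ncard_grassmannInterval_bot hY',
    finrank_top]
  exact (gaussNum_strictMono Nat.card_pos).monotone (by omega)

theorem image_line_eq_line (hf : IsAdjInjection m D f) (hX : finrank K X = m)
    (hXD : grassmannInterval (m + 1) X ⊤ ⊆ D) (hX' : finrank K X' = m) (hXY' : X' ≤ Y')
    (hY' : finrank K Y' = m + 2)
    (htop : f '' grassmannInterval (m + 1) X ⊤ ⊆ grassmannInterval (m + 1) ⊥ Y')
    (hP : P ∈ D) (hPX : finrank K ↥(P ⊔ X) = m + 2) (hX'P : X' ≤ f P) (hPY' : ¬ f P ≤ Y') :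
    f '' grassmannInterval (m + 1) X (P ⊔ X) = grassmannInterval (m + 1) X' Y' := by
  have hline : grassmannInterval (m + 1) X (P ⊔ X) ⊆ grassmannInterval (m + 1) X ⊤ :=
    grassmannInterval_subset le_rfl le_top
  refine hf.image_eq_of_ncard_le (hline.trans hXD) ?_
    (by rw [ncard_line hXY' hX' hY', ncard_line le_sup_right hX hPX])
  rintro _ ⟨R, hR, rfl⟩
  have hRD := hXD (hline hR)
  have hRY' : f R ≤ Y' := (htop ⟨R, hline hR, rfl⟩).2.2
  have hPR : finrank K ↥(P ⊓ R) = m :=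
    pairwise_grassmannInterval_of_finrank_right hPX ⟨hf.finrank_eq P hP, bot_le, le_sup_left⟩
      ⟨hR.1, bot_le, hR.2.2⟩ fun h => hPY' (h ▸ hRY')
  exact ⟨hf.finrank_map R hRD, le_of_finrank_inf_eq hX' (hf.finrank_map P hP) hX'P hXY' hPY' hRY'
    (hf.adj P hP R hRD hPR), hRY'⟩

theorem sup_eq_sup_of_not_map_le (hf : IsAdjInjection m D f) (hX : finrank K X = m)
    (hXD : grassmannInterval (m + 1) X ⊤ ⊆ D) (hX' : finrank K X' = m) (hXY' : X' ≤ Y')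
    (hY' : finrank K Y' = m + 2)
    (htop : f '' grassmannInterval (m + 1) X ⊤ ⊆ grassmannInterval (m + 1) ⊥ Y')
    (hP : P ∈ D) (hPX : finrank K ↥(P ⊔ X) = m + 2) (hX'P : X' ≤ f P) (hPY' : ¬ f P ≤ Y')
    (hQ : Q ∈ D) (hQX : finrank K ↥(Q ⊔ X) = m + 2) (hX'Q : X' ≤ f Q) (hQY' : ¬ f Q ≤ Y') :
    P ⊔ X = Q ⊔ X := by
  have hline (Z : Submodule K V) : grassmannInterval (m + 1) X Z ⊆ D :=
    (grassmannInterval_subset le_rfl le_top).trans hXD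
  have himage : f '' grassmannInterval (m + 1) X (P ⊔ X) =
      f '' grassmannInterval (m + 1) X (Q ⊔ X) := by
    rw [hf.image_line_eq_line hX hXD hX' hXY' hY' htop hP hPX hX'P hPY',
      hf.image_line_eq_line hX hXD hX' hXY' hY' htop hQ hQX hX'Q hQY']
  have hlines := (hf.injOn.image_eq_image_iff (hline _) (hline _)).1 himage
  exact eq_of_nontrivial_of_subset_grassmannInterval
    (grassmannInterval_nontrivial le_sup_right hX hPX.ge) subset_rfl hlines.subset hPX hQX

theorem ncard_setOf_not_map_le (hf : IsAdjInjection m D f) (hX₁ : finrank K X₁ = m)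
    (hX₂ : finrank K X₂ = m) (hsup : finrank K ↥(X₁ ⊔ X₂) = m + 1)
    (hX₁D : grassmannInterval (m + 1) X₁ ⊤ ⊆ D) (hX₂D : grassmannInterval (m + 1) X₂ ⊤ ⊆ D)
    (hX' : finrank K X' = m) (hXY' : X' ≤ Y') (hY' : finrank K Y' = m + 2)
    (hstar : f '' grassmannInterval (m + 1) X₁ ⊤ ⊆ grassmannInterval (m + 1) X' ⊤)
    (htop : f '' grassmannInterval (m + 1) X₂ ⊤ ⊆ grassmannInterval (m + 1) ⊥ Y') :
    {P ∈ grassmannInterval (m + 1) X₁ ⊤ | ¬ f P ≤ Y'}.ncard ≤ Nat.card K + 1 := by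
  set S := {P ∈ grassmannInterval (m + 1) X₁ ⊤ | ¬ f P ≤ Y'}
  have hfM : f (X₁ ⊔ X₂) ≤ Y' := (htop ⟨_, ⟨hsup, le_sup_right, le_top⟩, rfl⟩).2.2
  have hplane {P} (hP : P ∈ S) : finrank K ↥(P ⊔ X₂) = m + 2 := by
    have hinf := inf_eq_of_mem_grassmannInterval hP.1 ⟨hsup, le_sup_left, le_top⟩
      (fun h => hP.2 (h ▸ hfM)) hX₁
    have hdim := Submodule.finrank_sup_add_finrank_inf_eq P (X₁ ⊔ X₂)
    rw [hinf, hsup, hP.1.1, ← sup_assoc, sup_eq_left.2 hP.1.2.1] at hdim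
    omega
  have hX'S {P} (hP : P ∈ S) : X' ≤ f P := (hstar ⟨P, hP.1, rfl⟩).2.1
  obtain hempty | ⟨P, hP⟩ := S.eq_empty_or_nonempty
  · rw [hempty, Set.ncard_empty]
    exact Nat.zero_le _
  rw [← ncard_line (hP.1.2.1.trans le_sup_left) hX₁ (hplane hP)]
  refine Set.ncard_le_ncard fun Q hQ => ⟨hQ.1.1, hQ.1.2.1, ?_⟩
  rw [hf.sup_eq_sup_of_not_map_le hX₂ hX₂D hX' hXY' hY' htop (hX₁D hP.1) (hplane hP) (hX'S hP) hP.2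
    (hX₁D hQ.1) (hplane hQ) (hX'S hQ) hQ.2]
  exact le_sup_left

theorem not_image_star_subset_top_of_subset_star (hf : IsAdjInjection m D f)
    (hV : m + 3 ≤ finrank K V) (hX₁ : finrank K X₁ = m) (hX₂ : finrank K X₂ = m)
    (hinf : finrank K ↥(X₁ ⊓ X₂) + 1 = m)
    (hX₁D : grassmannInterval (m + 1) X₁ ⊤ ⊆ D) (hX₂D : grassmannInterval (m + 1) X₂ ⊤ ⊆ D)
    (hX' : finrank K X' = m) (hY' : finrank K Y' = m + 2)
    (hstar : f '' grassmannInterval (m + 1) X₁ ⊤ ⊆ grassmannInterval (m + 1) X' ⊤) :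
    ¬ f '' grassmannInterval (m + 1) X₂ ⊤ ⊆ grassmannInterval (m + 1) ⊥ Y' := by
  intro htop
  have hsup : finrank K ↥(X₁ ⊔ X₂) = m + 1 := by
    have := Submodule.finrank_sup_add_finrank_inf_eq X₁ X₂
    omega
  have hXY' : X' ≤ Y' := (hstar ⟨_, ⟨hsup, le_sup_left, le_top⟩, rfl⟩).2.1.trans
    (htop ⟨_, ⟨hsup, le_sup_right, le_top⟩, rfl⟩).2.2
  have hle := hf.ncard_setOf_map_le hX₁D hX' hXY' hY' hstar
  have hnle := hf.ncard_setOf_not_map_le hX₁ hX₂ hsup hX₁D hX₂D hX' hXY' hY' hstar htop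
  have hsplit := Set.ncard_inter_add_ncard_sdiff_eq_ncard (grassmannInterval (m + 1) X₁ ⊤)
    {P | f P ≤ Y'}
  have hthree : gaussNum (Nat.card K) 3 ≤ (grassmannInterval (m + 1) X₁ ⊤).ncard := by
    rw [ncard_grassmannInterval_of_finrank_left le_top hX₁, finrank_top]
    exact (gaussNum_strictMono Nat.card_pos).monotone (by omega)
  have hq : 1 < Nat.card K := Finite.one_lt_card
  have htwice : gaussNum (Nat.card K) 3 ≤ (Nat.card K + 1) + (Nat.card K + 1) :=
    hthree.trans (hsplit.ge.trans (add_le_add hle hnle))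
  rw [gaussNum_three] at htwice
  nlinarith

end IsAdjInjection
end AdjInjectionFinite

section Codes

variable {F : Type*} [Field F] {n k m : ℕ} {X X₁ X₂ Y Y₁ Y₂ : Submodule F (Fin n → F)}

theorem starOf_eq_grassmannInterval (X : Submodule F (Fin n → F)) :
    starOf F n k X = grassmannInterval k X ⊤ := by
  simp [starOf, grassmannInterval]

theorem topOf_eq_grassmannInterval (Y : Submodule F (Fin n → F)) :
    topOf F n k Y = grassmannInterval k ⊥ Y := by
  simp [topOf, grassmannInterval]

theorem mem_ndCodes_of_le (hX : X ∈ ndCodes F n m) (hXY : X ≤ Y) (hY : finrank F Y = k) :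
    Y ∈ ndCodes F n k :=
  ⟨hY, fun i hi => hX.2 i (hXY.trans hi)⟩

theorem mem_ndCodes_of_one_mem (hX : finrank F X = m) (hone : 1 ∈ X) : X ∈ ndCodes F n m :=
  ⟨hX, fun i hi => one_ne_zero (hi hone : (1 : Fin n → F) i = 0)⟩

theorem grassmannInterval_subset_ndCodes (hX : X ∈ ndCodes F n m) (Y : Submodule F (Fin n → F)) :
    grassmannInterval k X Y ⊆ ndCodes F n k :=
  fun _ hP => mem_ndCodes_of_le hX hP.2.1 hP.1

theorem tcOf_subset_ndCodes (Y : Submodule F (Fin n → F)) : tcOf F n k Y ⊆ ndCodes F n k :=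
  Set.inter_subset_right

theorem exists_one_mem_reflTransGen (hm : 0 < m) (hX : X ∈ ndCodes F n m) :
    ∃ Z ∈ grassmannInterval m (F ∙ (1 : Fin n → F)) ⊤,
      ReflTransGen (AdjWithin (ndCodes F n m) m) X Z := by
  by_cases hone : (1 : Fin n → F) ∈ X
  · exact ⟨X, ⟨hX.1, by simpa using hone, le_top⟩, .refl⟩
  obtain ⟨A, hA, -, hAX⟩ : (grassmannInterval (m - 1) ⊥ X).Nonempty :=
    grassmannInterval_nonempty bot_le (by simp) (by rw [hX.1]; omega)
  have hZ : finrank F ↥(A ⊔ F ∙ (1 : Fin n → F)) = m := by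
    rw [Submodule.finrank_sup_span_singleton fun h => hone (hAX h), hA]
    omega
  have honeZ : (1 : Fin n → F) ∈ A ⊔ F ∙ (1 : Fin n → F) :=
    Submodule.mem_sup_right (Submodule.mem_span_singleton_self _)
  refine ⟨_, ⟨hZ, le_sup_right, le_top⟩, .single ⟨hX, mem_ndCodes_of_one_mem hZ honeZ, ?_⟩⟩
  rw [inf_sup_span_singleton_eq hAX hone]
  omega

theorem reflTransGen_adjWithin_ndCodes (hm : 0 < m) (hX : X ∈ ndCodes F n m)
    (hY : Y ∈ ndCodes F n m) : ReflTransGen (AdjWithin (ndCodes F n m) m) X Y := by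
  obtain ⟨X₀, hX₀, hXX₀⟩ := exists_one_mem_reflTransGen hm hX
  obtain ⟨Y₀, hY₀, hYY₀⟩ := exists_one_mem_reflTransGen hm hY
  have hstar : grassmannInterval m (F ∙ (1 : Fin n → F)) ⊤ ⊆ ndCodes F n m := fun P hP =>
    mem_ndCodes_of_one_mem hP.1 (by simpa using hP.2.1)
  have hX₀Y₀ := ReflTransGen.mono (fun _ _ => AdjWithin.mono hstar) _ _
    (reflTransGen_adjWithin_star hX₀ hY₀)
  exact hXX₀.trans (hX₀Y₀.trans (symm_of _ hYY₀))

variable [Finite F]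

theorem gaussNum_le_ncard_tcOf_add (hY : Y ∈ ndCodes F n (k + 1)) :
    gaussNum (Nat.card F) (k + 1) ≤ (tcOf F n k Y).ncard + n := by
  have hdegenerate : topOf F n k Y \ ndCodes F n k ⊆ Set.range fun i => Y ⊓ coordHyp F n i := by
    rintro P ⟨⟨hP, hPY⟩, hnd⟩
    obtain ⟨i, hi⟩ : ∃ i, P ≤ coordHyp F n i := by
      by_contra! h
      exact hnd ⟨hP, h⟩
    have hlt := Submodule.finrank_lt_finrank_of_lt (inf_lt_left.2 (hY.2 i))
    rw [hY.1] at hlt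
    exact ⟨i, (Submodule.eq_of_le_of_finrank_le (le_inf hPY hi) (by omega)).symm⟩
  have hrange : (Set.range fun i => Y ⊓ coordHyp F n i).ncard ≤ n := by
    rw [← Set.image_univ]
    exact (Set.ncard_image_le Set.finite_univ).trans (by simp)
  rw [← ncard_grassmannInterval_bot hY.1, ← topOf_eq_grassmannInterval,
    ← Set.ncard_inter_add_ncard_sdiff_eq_ncard _ (ndCodes F n k)]
  exact Nat.add_le_add_left ((Set.ncard_le_ncard hdegenerate).trans hrange) _

theorem ncard_tcOf_inter_le_one (hY₁ : finrank F Y₁ = k + 1) (hY₂ : finrank F Y₂ = k + 1)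
    (hne : Y₁ ≠ Y₂) : (tcOf F n k Y₁ ∩ tcOf F n k Y₂).ncard ≤ 1 := by
  rw [← not_lt, Set.one_lt_ncard_iff_nontrivial]
  intro hnt
  refine hne (eq_of_nontrivial_of_subset_grassmannInterval hnt (X := ⊥) ?_ ?_ hY₁ hY₂)
  · exact fun P hP => ⟨hP.1.1.1, bot_le, hP.1.1.2⟩
  · exact fun P hP => ⟨hP.2.1.1, bot_le, hP.2.1.2⟩

namespace IsAdjInjection

variable {f : Submodule F (Fin n → F) → Submodule F (Fin n → F)} {X' Y' : Submodule F (Fin n → F)}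

theorem not_image_tcOf_subset_star (hf : IsAdjInjection m (ndCodes F n (m + 1)) f) (hm : 2 ≤ m)
    (hn : n ≤ 2 * m + 1) (hY : Y ∈ ndCodes F n (m + 2)) (hX' : finrank F X' = m) :
    ¬ f '' tcOf F n (m + 1) Y ⊆ grassmannInterval (m + 1) X' ⊤ := by
  intro hstar
  have hcard := hf.ncard_le_of_image_subset (tcOf_subset_ndCodes Y) hstar
  rw [ncard_grassmannInterval_of_finrank_left le_top hX', finrank_top, finrank_fin_fun] at hcard
  have hmono : gaussNum (Nat.card F) (n - m) ≤ gaussNum (Nat.card F) (m + 1) :=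
    (gaussNum_strictMono Nat.card_pos).monotone (by omega)
  have hY_card := gaussNum_le_ncard_tcOf_add hY
  rw [gaussNum_succ] at hY_card
  have hpow := add_two_le_two_pow hm
  have hq : 2 ≤ Nat.card F := Finite.one_lt_card
  have hpow_card := Nat.pow_le_pow_left hq (m + 1)
  rw [pow_succ 2] at hpow_card
  omega

theorem image_tcOf_subset_top (hf : IsAdjInjection m (ndCodes F n (m + 1)) f) (hm : 2 ≤ m)
    (hn : n ≤ 2 * m + 1) (hX : X ∈ ndCodes F n m) (hXY : X ≤ Y) (hY : finrank F Y = m + 2)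
    (hY' : finrank F Y' = m + 2)
    (htop : f '' grassmannInterval (m + 1) X ⊤ ⊆ grassmannInterval (m + 1) ⊥ Y') :
    f '' tcOf F n (m + 1) Y ⊆ grassmannInterval (m + 1) ⊥ Y' := by
  have hline : (grassmannInterval (m + 1) X Y).Nontrivial :=
    grassmannInterval_nontrivial hXY hX.1 hY.ge
  have hline_tc : grassmannInterval (m + 1) X Y ⊆ tcOf F n (m + 1) Y := fun P hP =>
    ⟨⟨hP.1, hP.2.2⟩, grassmannInterval_subset_ndCodes hX Y hP⟩
  have hline_star : grassmannInterval (m + 1) X Y ⊆ grassmannInterval (m + 1) X ⊤ :=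
    grassmannInterval_subset le_rfl le_top
  have htc : tcOf F n (m + 1) Y ⊆ grassmannInterval (m + 1) ⊥ Y :=
    (topOf_eq_grassmannInterval Y).subset.trans' Set.inter_subset_left
  obtain ⟨X', hX', hstar⟩ | ⟨Z, hZ, hsub⟩ :=
    hf.image_subset_star_or_subset_top (tcOf_subset_ndCodes Y)
      ((pairwise_grassmannInterval_of_finrank_right hY).mono htc) (hline.mono hline_tc)
  · exact absurd hstar (hf.not_image_tcOf_subset_star hm hn (mem_ndCodes_of_le hX hXY hY) hX')
  · have himage : (f '' grassmannInterval (m + 1) X Y).Nontrivial :=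
      hline.image_of_injOn (hf.injOn.mono (grassmannInterval_subset_ndCodes hX Y))
    rwa [eq_of_nontrivial_of_subset_grassmannInterval himage
      ((Set.image_mono hline_star).trans htop) ((Set.image_mono hline_tc).trans hsub) hY' hZ]

theorem two_mul_le_of_image_star_subset_top (hf : IsAdjInjection m (ndCodes F n (m + 1)) f)
    (hn : m + 3 ≤ n) (hX : X ∈ ndCodes F n m) (hY' : finrank F Y' = m + 2)
    (htop : f '' grassmannInterval (m + 1) X ⊤ ⊆ grassmannInterval (m + 1) ⊥ Y') :
    2 * (m + 1) ≤ n := by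
  by_contra! hlt
  have hm : 2 ≤ m := by omega
  obtain ⟨M, hM, hXM, -⟩ : (grassmannInterval (m + 1) X ⊤).Nonempty :=
    grassmannInterval_nonempty le_top (by rw [hX.1]; omega)
      (by rw [finrank_top, finrank_fin_fun]; omega)
  obtain ⟨Y₁, hY₁, Y₂, hY₂, hne⟩ :=
    grassmannInterval_nontrivial (le_top (a := M)) hM
      (by rw [finrank_top, finrank_fin_fun]; omega)
  have hcard₁ := gaussNum_le_ncard_tcOf_add (mem_ndCodes_of_le hX (hXM.trans hY₁.2.1) hY₁.1)
  have hcard₂ := gaussNum_le_ncard_tcOf_add (mem_ndCodes_of_le hX (hXM.trans hY₂.2.1) hY₂.1)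
  have hsub₁ := hf.image_tcOf_subset_top hm (by omega) hX (hXM.trans hY₁.2.1) hY₁.1 hY' htop
  have hsub₂ := hf.image_tcOf_subset_top hm (by omega) hX (hXM.trans hY₂.2.1) hY₂.1 hY' htop
  have hunion := hf.ncard_le_of_image_subset
    (Set.union_subset (tcOf_subset_ndCodes Y₁) (tcOf_subset_ndCodes Y₂))
    ((Set.image_union _ _ _).subset.trans (Set.union_subset hsub₁ hsub₂))
  rw [ncard_grassmannInterval_bot hY'] at hunion
  have hinter := ncard_tcOf_inter_le_one hY₁.1 hY₂.1 hne
  have hadd := Set.ncard_union_add_ncard_inter (tcOf F n (m + 1) Y₁) (tcOf F n (m + 1) Y₂)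
  have hlarge : 4 * m + 7 ≤ gaussNum (Nat.card F) (m + 1 + 1) :=
    four_mul_add_seven_le_gaussNum Finite.one_lt_card hm
  omega

theorem exists_image_star_subset_top (hf : IsAdjInjection m (ndCodes F n (m + 1)) f) (hm : 0 < m)
    (hn : m + 3 ≤ n) (hX₁ : X₁ ∈ ndCodes F n m)
    (htop : ∃ Y' : Submodule F (Fin n → F), finrank F Y' = m + 2 ∧
      f '' grassmannInterval (m + 1) X₁ ⊤ ⊆ grassmannInterval (m + 1) ⊥ Y')
    (hX₂ : X₂ ∈ ndCodes F n m) :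
    ∃ Y' : Submodule F (Fin n → F), finrank F Y' = m + 2 ∧
      f '' grassmannInterval (m + 1) X₂ ⊤ ⊆ grassmannInterval (m + 1) ⊥ Y' := by
  induction reflTransGen_adjWithin_ndCodes hm hX₁ hX₂ with
  | refl => exact htop
  | tail _ hstep ih =>
    have ⟨hB, hC, _⟩ := hstep
    obtain ⟨Y', hY', hBY'⟩ := ih hB
    have hstarD {A} (hA : A ∈ ndCodes F n m) := grassmannInterval_subset_ndCodes (k := m + 1) hA ⊤
    refine (hf.image_star_subset_star_or_subset_top hC.1 (hstarD hC) ?_).resolve_left ?_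
    · rw [finrank_fin_fun]
      omega
    rintro ⟨X', hX', hstar⟩
    exact hf.not_image_star_subset_top_of_subset_star (by simpa using hn) hC.1 hB.1
      (symm_of _ hstep).2.2 (hstarD hC) (hstarD hB) hX' hY' hstar hBY'

end IsAdjInjection
end Codes

/-- For an injective adjacency-preserving `f : C(n,k)_q → G_k(V)`,
either `f` sends every maximal star `S(X)`, `X ∈ C(n,k-1)_q`, to a star of `Γ_k(V)`,
or `n = 2k` and `f` sends every such maximal star to a top of `Γ_k(V)`. -/
theorem stmt_9 (q n k : ℕ) (F : Type*) [Field F] [Fintype F]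
    (hF : Fintype.card F = q) (hk : 1 < k) (hkn : k < n - 1)
    (f : Submodule F (Fin n → F) → Submodule F (Fin n → F))
    (hmem : ∀ X ∈ ndCodes F n k, f X ∈ grass F n k)
    (hinj : Set.InjOn f (ndCodes F n k))
    (hadj : ∀ X ∈ ndCodes F n k, ∀ Y ∈ ndCodes F n k,
      adjSub F n k X Y → adjSub F n k (f X) (f Y)) :
    (∀ X ∈ ndCodes F n (k - 1), ∃ X' : Submodule F (Fin n → F),
        Module.finrank F ↥X' = k - 1 ∧ f '' starOf F n k X = starOf F n k X') ∨
    (n = 2 * k ∧ ∀ X ∈ ndCodes F n (k - 1), ∃ Y' : Submodule F (Fin n → F),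
        Module.finrank F ↥Y' = k + 1 ∧ f '' starOf F n k X = topOf F n k Y') := by
  obtain ⟨m, rfl⟩ := Nat.exists_eq_add_of_le' hk.le
  have hf : IsAdjInjection m (ndCodes F n (m + 1)) f := ⟨fun _ hP => hP.1, hmem, hinj, hadj⟩
  have hV : finrank F (Fin n → F) = n := finrank_fin_fun F
  have hstarD {A} (hA : A ∈ ndCodes F n m) := grassmannInterval_subset_ndCodes (k := m + 1) hA ⊤
  simp only [starOf_eq_grassmannInterval, topOf_eq_grassmannInterval, Nat.add_sub_cancel]
  by_cases htop : ∃ X ∈ ndCodes F n m, ∃ Y' : Submodule F (Fin n → F), finrank F Y' = m + 2 ∧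
      f '' grassmannInterval (m + 1) X ⊤ ⊆ grassmannInterval (m + 1) ⊥ Y'
  · obtain ⟨X₀, hX₀, Y₀', hY₀', h₀⟩ := htop
    have hle := hf.finrank_le_of_image_star_subset_top hX₀.1 (hstarD hX₀) hY₀' h₀
    have hge := hf.two_mul_le_of_image_star_subset_top (by omega) hX₀ hY₀' h₀
    refine Or.inr ⟨le_antisymm (hV ▸ hle) hge, fun X hX => ?_⟩
    obtain ⟨Y', hY', h⟩ :=
      hf.exists_image_star_subset_top (by omega) (by omega) hX₀ ⟨Y₀', hY₀', h₀⟩ hX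
    exact ⟨Y', hY', hf.image_star_eq_top (by omega) hX.1 (hstarD hX) hY' h⟩
  · refine Or.inl fun X hX => ?_
    obtain ⟨X', hX', h⟩ := (hf.image_star_subset_star_or_subset_top hX.1 (hstarD hX)
      (by omega)).resolve_right fun h => htop ⟨X, hX, h⟩
    exact ⟨X', hX', hf.image_star_eq_star le_rfl hX.1 (hstarD hX) hX' h⟩
end
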